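/- Let P, Q be λμ-terms, p, p' ∈ T(P), [d⃗], [d⃗'] finite multisets of elements of T(Q), x a variable and γ, η names. Then p = p' and [d⃗] = [d⃗'] follow from any of the three conditions: (1) p⟨[d⃗]/x⟩ ∩ p'⟨[d⃗']/x⟩ ≠ ∅; (2) ⟨p⟩_γ[d⃗] ∩ ⟨p'⟩_γ[d⃗'] ≠ ∅; (3) ⟨[η]p⟩_γ[d⃗] ∩ ⟨[η]p'⟩_γ[d⃗'] ≠ ∅ (intersections taken as sets of resource terms, resp. named resource terms). -/

import Mathlib

/-!
All elements of `Taylor P` have the shape of `P`; they differ only in the bags standing at the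
argument positions. Hence linear substitution and linear named application follow the same clause
of their definition on `p` and on `p'`, and an addend `w` shows where every resource went: at an
occurrence of the substituted variable the resource is the whole subterm of `w` found there, and
at a subterm named by the acted-upon name the bag of resources is the argument of the new
application.

The proof is an induction on `P` (`linSub_injOn`, `nApp_injOn`) of the property `InjOn`: each
addend determines the term and the bag, the latter up to permutation. The application case
(`appMap_inj`) compares bags position by position, the length of the bag being readable off `w`,
and recovers the multiset of resources as the sum of the parts it was split into
(`flatten_of_mem_splits`). The case of a subterm with the acted-upon name is `split_inj`, which
also gives the statement for named terms.
-/

set_option maxHeartbeats 1000000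

namespace RLMu

inductive Rt : Type where
  | var : ℕ → Rt
  | lam : ℕ → Rt → Rt
  | app : Rt → List Rt → Rt
  | mu  : ℕ → ℕ → Rt → Rt

noncomputable instance : DecidableEq Rt := Classical.decEq _

namespace Rt

mutual
  def renameN (a b : ℕ) : Rt → Rt
    | var y => var y
    | lam y t => lam y (renameN a b t)
    | app t ts => app (renameN a b t) (renameNBag a b ts)
    | mu g e t =>
        if g = b then mu g e t
        else mu g (if e = b then a else e) (renameN a b t)
  def renameNBag (a b : ℕ) : List Rt → List Rt
    | [] => []
    | t :: ts => renameN a b t :: renameNBag a b ts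
end

def modifyIdx (t : Rt) : List (List Rt) → ℕ → List (List Rt)
  | [], _ => []
  | l :: ls, 0 => (t :: l) :: ls
  | l :: ls, i + 1 => l :: modifyIdx t ls i

def splits (n : ℕ) : List Rt → Multiset (List (List Rt))
  | [] => {List.replicate n []}
  | t :: ts => (splits n ts).bind fun ls => (Multiset.range n).map fun i => modifyIdx t ls i

def splits2 : List Rt → Multiset (List Rt × List Rt)
  | [] => {([], [])}
  | t :: ts => (splits2 ts).bind fun p => {(t :: p.1, p.2), (p.1, t :: p.2)}

-- the (quantitative) linear substitution t⟨[ū]/x⟩ : the sum over all ways of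
-- assigning the elements of the bag bijectively to the free occurrences of x in t
mutual
  def linSub (x : ℕ) : Rt → List Rt → Multiset Rt
    | var y, bag =>
        if y = x then (match bag with | [u] => ({u} : Multiset Rt) | _ => 0)
        else (match bag with | [] => ({var y} : Multiset Rt) | _ => 0)
    | lam y t, bag =>
        if y = x then (match bag with | [] => ({lam y t} : Multiset Rt) | _ => 0)
        else (linSub x t bag).map (lam y)
    | mu g e t, bag => (linSub x t bag).map (mu g e)
    | app t ts, bag =>
        (splits (ts.length + 1) bag).bind fun ls =>
          match ls with
          | l0 :: rest =>
              (linSub x t l0).bind fun s =>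
                (linSubBag x ts rest).map fun ss => app s ss
          | [] => 0
  def linSubBag (x : ℕ) : List Rt → List (List Rt) → Multiset (List Rt)
    | [], [] => {([] : List Rt)}
    | [], _ :: _ => 0
    | _ :: _, [] => 0
    | t :: ts, l :: ls =>
        (linSub x t l).bind fun s => (linSubBag x ts ls).map fun ss => s :: ss
end

end Rt

end RLMu

namespace RLMu
namespace Rt

-- the (quantitative) linear named application ⟨t⟩_a[ū]
mutual
  def nApp (a : ℕ) : Rt → List Rt → Multiset Rt
    | var y, bag => (match bag with | [] => ({var y} : Multiset Rt) | _ => 0)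
    | lam y t, bag => (nApp a t bag).map (lam y)
    | mu g e t, bag =>
        if g = a then (match bag with | [] => ({mu g e t} : Multiset Rt) | _ => 0)
        else if e = a then
          (splits2 bag).bind fun p =>
            (nApp a t p.1).map fun s => mu g e (app s p.2)
        else (nApp a t bag).map (mu g e)
    | app t ts, bag =>
        (splits (ts.length + 1) bag).bind fun ls =>
          match ls with
          | l0 :: rest =>
              (nApp a t l0).bind fun s =>
                (nAppBag a ts rest).map fun ss => app s ss
          | [] => 0
  def nAppBag (a : ℕ) : List Rt → List (List Rt) → Multiset (List Rt)
    | [], [] => {([] : List Rt)}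
    | [], _ :: _ => 0
    | _ :: _, [] => 0
    | t :: ts, l :: ls =>
        (nApp a t l).bind fun s => (nAppBag a ts ls).map fun ss => s :: ss
end

mutual
  def degName (a : ℕ) : Rt → ℕ
    | var _ => 0
    | lam _ t => degName a t
    | app t ts => degName a t + degNameBag a ts
    | mu g e t => if g = a then 0 else (if e = a then 1 else 0) + degName a t
  def degNameBag (a : ℕ) : List Rt → ℕ
    | [] => 0
    | t :: ts => degName a t + degNameBag a ts
end

/-- the linear named application `⟨[e]t⟩_g [ū]` on the named term `[e]t`, a named
term `[e']t'` being represented by the pair `(e', t')` -/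
def nAppNamed (g e : ℕ) (t : Rt) (bag : List Rt) : Multiset (ℕ × Rt) :=
  if e = g then
    (splits2 bag).bind fun p => (nApp g t p.1).map fun s => (g, app s p.2)
  else (nApp g t bag).map fun s => (e, s)

/-- `μa.⟨[b]t⟩_a [ū]`, the reduct of the μ-redex `(μa.[b]t)[ū]` -/
def muRedex (a b : ℕ) (t : Rt) (bag : List Rt) : Multiset Rt :=
  if b = a then
    (splits2 bag).bind fun p => (nApp a t p.1).map fun s => mu a a (app s p.2)
  else (nApp a t bag).map (mu a b)

end Rt

open Rt

/-- base step of the λʳ-reduction -/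
inductive BaseLam : Rt → Multiset Rt → Prop
  | step (x : ℕ) (t : Rt) (bag : List Rt) :
      BaseLam (.app (.lam x t) bag) (linSub x t bag)

/-- base step of the μʳ-reduction -/
inductive BaseMu : Rt → Multiset Rt → Prop
  | step (a b : ℕ) (t : Rt) (bag : List Rt) :
      BaseMu (.app (.mu a b t) bag) (muRedex a b t bag)

/-- base step of the ρʳ-reduction -/
inductive BaseRho : Rt → Multiset Rt → Prop
  | step (g a b e : ℕ) (t : Rt) :
      BaseRho (.mu g a (.mu b e t))
        ({.mu g (if e = b then a else e) (renameN a b t)} : Multiset Rt)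

/-- closure of a base reduction under single-hole resource contexts -/
inductive Ctx (B : Rt → Multiset Rt → Prop) : Rt → Multiset Rt → Prop
  | base {t S} : B t S → Ctx B t S
  | lam (x : ℕ) {t S} : Ctx B t S → Ctx B (.lam x t) (S.map (.lam x))
  | mu (a b : ℕ) {t S} : Ctx B t S → Ctx B (.mu a b t) (S.map (.mu a b))
  | appL (bag : List Rt) {t S} :
      Ctx B t S → Ctx B (.app t bag) (S.map fun s => .app s bag)
  | appR (t : Rt) (l r : List Rt) {u S} :
      Ctx B u S → Ctx B (.app t (l ++ u :: r)) (S.map fun s => .app t (l ++ s :: r))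

/-- the quantitative resource reduction →ᵣ⁺ from terms to sums in ℕ⟨λμʳ⟩ -/
def QStep : Rt → Multiset Rt → Prop :=
  Ctx fun t S => BaseLam t S ∨ BaseMu t S ∨ BaseRho t S

/-- the quantitative resource reduction →ᵣ⁺ on sums of ℕ⟨λμʳ⟩ -/
inductive QRed : Multiset Rt → Multiset Rt → Prop
  | mk {t : Rt} {S R : Multiset Rt} : QStep t S → QRed (t ::ₘ R) (S + R)

/-- the qualitative version (with idempotent sum, i.e. with sums in 2⟨λμʳ⟩)
of the contextual closure of a base reduction: from terms to sums in 2⟨λμʳ⟩ -/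
noncomputable def StepOf (B : Rt → Multiset Rt → Prop) (t : Rt) (T : Finset Rt) : Prop :=
  ∃ S : Multiset Rt, Ctx B t S ∧ T = S.toFinset

/-- the reduction →_{λʳ} : contextual closure of the λʳ base step, in 2⟨λμʳ⟩ -/
noncomputable def StepLam : Rt → Finset Rt → Prop := StepOf BaseLam
/-- the reduction →_{μʳ} : contextual closure of the μʳ base step, in 2⟨λμʳ⟩ -/
noncomputable def StepMu : Rt → Finset Rt → Prop := StepOf BaseMu
/-- the reduction →_{ρʳ} : contextual closure of the ρʳ base step, in 2⟨λμʳ⟩ -/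
noncomputable def StepRho : Rt → Finset Rt → Prop := StepOf BaseRho

/-- the resource reduction →ᵣ from terms to sums in 2⟨λμʳ⟩ -/
noncomputable def RStep (t : Rt) (T : Finset Rt) : Prop :=
  ∃ S : Multiset Rt, QStep t S ∧ T = S.toFinset

/-- the resource reduction →ᵣ on sums in 2⟨λμʳ⟩ -/
inductive FRed : Finset Rt → Finset Rt → Prop
  | mk {t : Rt} {R S : Finset Rt} : RStep t S → t ∉ R → FRed (insert t R) (S ∪ R)

/-- a resource term is →ᵣ-normal -/
def NormalTm (t : Rt) : Prop := ∀ S : Multiset Rt, ¬ QStep t S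

end RLMu

namespace RLMu
namespace Rt

-- number of μ-abstractions occurring in a term
mutual
  def degMu : Rt → ℕ
    | var _ => 0
    | lam _ t => degMu t
    | mu _ _ t => degMu t + 1
    | app t ts => degMu t + degMuBag ts
  def degMuBag : List Rt → ℕ
    | [] => 0
    | t :: ts => degMu t + degMuBag ts
end

-- the multiset of the depths (number of enclosing named subterms) of the
-- occurrences of bags in a term
mutual
  def depths : Rt → Multiset ℕ
    | var _ => 0
    | lam _ t => depths t
    | mu _ _ t => (depths t).map (· + 1)
    | app t ts => (0 : ℕ) ::ₘ (depths t + depthsBag ts)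
  def depthsBag : List Rt → Multiset ℕ
    | [] => 0
    | t :: ts => depths t + depthsBag ts
end

/-- the multiset measure `m(t)` : the multiset of `deg_μ(t) - d_t(b)` over the
occurrences `b` of bags in `t` -/
def msr (t : Rt) : Multiset ℕ := (depths t).map fun d => degMu t - d

end Rt

/-- the (Dershowitz–Manna) multiset order on finite multisets of naturals -/
def MLT (M N : Multiset ℕ) : Prop :=
  ∃ X Y Z : Multiset ℕ, X ≠ 0 ∧ N = Z + X ∧ M = Z + Y ∧ ∀ y ∈ Y, ∃ x ∈ X, y < x

/-- the measure `SN(t) = (m(t), deg_μ(t))` -/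
def SNm (t : Rt) : Multiset ℕ × ℕ := (Rt.msr t, Rt.degMu t)

/-- lexicographic order on `!ℕ × ℕ` (multiset order on the first component) -/
def SNlt : Multiset ℕ × ℕ → Multiset ℕ × ℕ → Prop := Prod.Lex MLT (· < ·)

end RLMu

namespace RLMu

/-- λμ-terms. `mu a b M` denotes `μa.[b]M`. -/
inductive Lt : Type where
  | var : ℕ → Lt
  | lam : ℕ → Lt → Lt
  | app : Lt → Lt → Lt
  | mu  : ℕ → ℕ → Lt → Lt
  deriving DecidableEq

namespace Lt

/-- substitution `M{N/x}` -/
def subst (x : ℕ) (N : Lt) : Lt → Lt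
  | var y => if y = x then N else var y
  | lam y M => if y = x then lam y M else lam y (subst x N M)
  | app M P => app (subst x N M) (subst x N P)
  | mu a b M => mu a b (subst x N M)

/-- renaming `M{a/b}` of the free occurrences of the name `b` by `a` -/
def renameL (a b : ℕ) : Lt → Lt
  | var y => var y
  | lam y M => lam y (renameL a b M)
  | app M P => app (renameL a b M) (renameL a b P)
  | mu g e M =>
      if g = b then mu g e M
      else mu g (if e = b then a else e) (renameL a b M)

/-- the named application `(M)_a N` -/
def napp (a : ℕ) (N : Lt) : Lt → Lt
  | var y => var y
  | lam y M => lam y (napp a N M)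
  | app M P => app (napp a N M) (napp a N P)
  | mu g e M =>
      if g = a then mu g e M
      else if e = a then mu g e (app (napp a N M) N)
      else mu g e (napp a N M)

end Lt

open Lt

/-- base steps of the λμ-reduction: λ, μ and ρ -/
inductive LBase : Lt → Lt → Prop
  | lamStep (x : ℕ) (M N : Lt) : LBase (.app (.lam x M) N) (subst x N M)
  | muStep (a b : ℕ) (M N : Lt) :
      LBase (.app (.mu a b M) N)
        (if b = a then .mu a a (.app (napp a N M) N) else .mu a b (napp a N M))
  | rhoStep (g a b e : ℕ) (M : Lt) :
      LBase (.mu g a (.mu b e M)) (.mu g (if e = b then a else e) (renameL a b M))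

/-- the λμ-reduction → : contextual closure of the base steps -/
inductive LStep : Lt → Lt → Prop
  | base {M N} : LBase M N → LStep M N
  | lam (x : ℕ) {M N} : LStep M N → LStep (.lam x M) (.lam x N)
  | mu (a b : ℕ) {M N} : LStep M N → LStep (.mu a b M) (.mu a b N)
  | appL (P : Lt) {M N} : LStep M N → LStep (.app M P) (.app N P)
  | appR (P : Lt) {M N} : LStep M N → LStep (.app P M) (.app P N)

/-- the λμρ-equivalence `=_{λμρ}` generated by the λμ-reduction -/
inductive LEquiv : Lt → Lt → Prop
  | step {M N} : LStep M N → LEquiv M N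
  | refl (M) : LEquiv M M
  | symm {M N} : LEquiv M N → LEquiv N M
  | trans {M N P} : LEquiv M N → LEquiv N P → LEquiv M P

/-- the (qualitative) Taylor expansion -/
def Taylor : Lt → Set Rt
  | .var x => {Rt.var x}
  | .lam x M => Rt.lam x '' Taylor M
  | .mu a b M => Rt.mu a b '' Taylor M
  | .app M N =>
      {r | ∃ s ∈ Taylor M, ∃ bag : List Rt, (∀ u ∈ bag, u ∈ Taylor N) ∧ r = Rt.app s bag}

/-- the set `nf(t)` of the addends of the (unique) →ᵣ-normal form of a resource
term `t` : the →ᵣ-normal resource terms appearing in some sum reachable from `t` -/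
def NFof (t : Rt) : Set Rt :=
  {s | NormalTm s ∧ ∃ T : Finset Rt, Relation.ReflTransGen FRed {t} T ∧ s ∈ T}

/-- `NT(M)`, the normal form of the Taylor expansion of `M` -/
def NT (M : Lt) : Set Rt := ⋃ t ∈ Taylor M, NFof t

/-- λμ-contexts with `n` holes (each hole may occur any number of times) -/
inductive Ctxt (n : ℕ) : Type where
  | hole : Fin n → Ctxt n
  | var : ℕ → Ctxt n
  | lam : ℕ → Ctxt n → Ctxt n
  | app : Ctxt n → Ctxt n → Ctxt n
  | mu  : ℕ → ℕ → Ctxt n → Ctxt n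

/-- filling the holes of a context with terms -/
def fill {n : ℕ} : Ctxt n → (Fin n → Lt) → Lt
  | .hole i, f => f i
  | .var x, _ => .var x
  | .lam x C, f => .lam x (fill C f)
  | .app C D, f => .app (fill C f) (fill D f)
  | .mu a b C, f => .mu a b (fill C f)

/-- head reduction on λμ-terms (`none` iff the term is a head normal form):
first the leftmost ρ-redex in the head, otherwise the head redex -/
def headRed : Lt → Option Lt
  | .var _ => none
  | .lam x M => (headRed M).map (.lam x)
  | .mu g a (.mu b e M) => some (.mu g (if e = b then a else e) (renameL a b M))
  | .mu g a M => (headRed M).map (.mu g a)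
  | .app (.lam x P) N => some (subst x N P)
  | .app (.mu a b P) N =>
      some (if b = a then .mu a a (.app (napp a N P) N) else .mu a b (napp a N P))
  | .app M N => (headRed M).map (fun M' => .app M' N)

/-- `M` is a head normal form -/
def IsHnf (M : Lt) : Prop := headRed M = none

/-- the `n`-fold iteration `Hⁿ` of head reduction (as a partial function) -/
def headRedIter : ℕ → Lt → Option Lt
  | 0, M => some M
  | n + 1, M => (headRed M).bind (headRedIter n)

/-- head reduction on resource λμ-terms (the empty sum if the term is a hnf) -/
def headRedR : Rt → Multiset Rt
  | .var _ => 0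
  | .lam x t => (headRedR t).map (.lam x)
  | .mu g a (.mu b e t) => {.mu g (if e = b then a else e) (Rt.renameN a b t)}
  | .mu g a t => (headRedR t).map (.mu g a)
  | .app (.lam x p) bag => Rt.linSub x p bag
  | .app (.mu a b p) bag => Rt.muRedex a b p bag
  | .app t bag => (headRedR t).map fun s => .app s bag

/-- iterated λ-abstraction `λz₁…zₙ.M` -/
def lams : List ℕ → Lt → Lt
  | [], M => M
  | x :: xs, M => .lam x (lams xs M)

/-- iterated application `M N₁ … Nₙ` -/
def apps : Lt → List Lt → Lt
  | M, [] => M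
  | M, N :: Ns => apps (.app M N) Ns

/-- an upper bound for the variables occurring in a term -/
def varBound : Lt → ℕ
  | .var x => x + 1
  | .lam x M => max (x + 1) (varBound M)
  | .app M N => max (varBound M) (varBound N)
  | .mu _ _ M => varBound M

/-- `True := λxy.x` -/
def TrueT : Lt := .lam 0 (.lam 1 (.var 0))
/-- `False := λxy.y` -/
def FalseT : Lt := .lam 0 (.lam 1 (.var 1))
/-- the pair `⟨M,N⟩ := λz.zMN` (with `z` fresh) -/
def pairT (M N : Lt) : Lt :=
  let z := max (varBound M) (varBound N)
  .lam z (.app (.app (.var z) M) N)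
/-- `Ω := (λx.xx)(λx.xx)` -/
def Omega : Lt := .app (.lam 0 (.app (.var 0) (.var 0))) (.lam 0 (.app (.var 0) (.var 0)))

/-- the λμ-theory `≡_τ` equating terms with the same normal form of the Taylor
expansion -/
def Teq (M N : Lt) : Prop := NT M = NT N

end RLMu

namespace RLMu

namespace Rt

lemma modifyIdx_flatten (t : Rt) :
    ∀ (ls : List (List Rt)) (i : ℕ), i < ls.length →
      ((modifyIdx t ls i).flatten : Multiset Rt) = t ::ₘ (ls.flatten : Multiset Rt)
  | [], i, h => by simp at h
  | l :: ls, 0, _ => by simp [modifyIdx]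
  | l :: ls, i + 1, h => by
    have ih := modifyIdx_flatten t ls i (by simpa using h)
    simp only [modifyIdx, List.flatten_cons, ← Multiset.coe_add, ih, Multiset.add_cons]

lemma modifyIdx_length (t : Rt) :
    ∀ (ls : List (List Rt)) (i : ℕ), (modifyIdx t ls i).length = ls.length
  | [], _ => by simp [modifyIdx]
  | _ :: _, 0 => by simp [modifyIdx]
  | _ :: ls, i + 1 => by simp [modifyIdx, modifyIdx_length t ls i]

lemma flatten_of_mem_splits (n : ℕ) :
    ∀ (d : List Rt) (ls : List (List Rt)), ls ∈ splits n d →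
      ls.length = n ∧ (ls.flatten : Multiset Rt) = d
  | [], ls, h => by
    simp only [splits, Multiset.mem_singleton] at h
    simp [h]
  | t :: d, ls, h => by
    simp only [splits, Multiset.mem_bind, Multiset.mem_map, Multiset.mem_range] at h
    obtain ⟨ms, hms, i, hi, rfl⟩ := h
    obtain ⟨h1, h2⟩ := flatten_of_mem_splits n d ms hms
    refine ⟨by rw [modifyIdx_length, h1], ?_⟩
    rw [modifyIdx_flatten t ms i (by omega), h2]
    rfl

lemma add_of_mem_splits2 :
    ∀ (d : List Rt) (q : List Rt × List Rt), q ∈ splits2 d →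
      (d : Multiset Rt) = (q.1 : Multiset Rt) + (q.2 : Multiset Rt)
  | [], q, h => by
    simp only [splits2, Multiset.mem_singleton] at h
    simp [h]
  | t :: d, q, h => by
    simp only [splits2, Multiset.mem_bind, Multiset.insert_eq_cons, Multiset.mem_cons,
      Multiset.mem_singleton] at h
    obtain ⟨r, hr, rfl | rfl⟩ := h
    · simp only [← Multiset.cons_coe, add_of_mem_splits2 d r hr, Multiset.cons_add]
    · simp only [← Multiset.cons_coe, add_of_mem_splits2 d r hr, Multiset.add_cons]

/-- A multilinear operation `f` (linear substitution or linear named application) is injective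
on a set `A` of resource terms when every addend of `f p d` with `p ∈ A` determines both `p` and
the bag `d`; bags being encoded as lists, `d` is determined up to permutation. -/
def InjOn (f : Rt → List Rt → Multiset Rt) (A : Set Rt) : Prop :=
  ∀ p ∈ A, ∀ p' ∈ A, ∀ (d d' : List Rt) (w : Rt), w ∈ f p d → w ∈ f p' d' →
    p = p' ∧ (d : Multiset Rt) = d'

/-- The pointwise extension of `f` to bags, the `i`-th element of the bag receiving the `i`-th
list of resources. -/
def bagMap (f : Rt → List Rt → Multiset Rt) : List Rt → List (List Rt) → Multiset (List Rt)
  | [], [] => {[]}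
  | [], _ :: _ => 0
  | _ :: _, [] => 0
  | t :: ts, l :: ls => (f t l).bind fun s => (bagMap f ts ls).map fun ss => s :: ss

lemma linSubBag_eq (x : ℕ) : ∀ ts ls, linSubBag x ts ls = bagMap (linSub x) ts ls
  | [], [] => by simp [linSubBag, bagMap]
  | [], _ :: _ => by simp [linSubBag, bagMap]
  | _ :: _, [] => by simp [linSubBag, bagMap]
  | t :: ts, l :: ls => by simp [linSubBag, bagMap, linSubBag_eq x ts ls]

lemma nAppBag_eq (a : ℕ) : ∀ ts ls, nAppBag a ts ls = bagMap (nApp a) ts ls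
  | [], [] => by simp [nAppBag, bagMap]
  | [], _ :: _ => by simp [nAppBag, bagMap]
  | _ :: _, [] => by simp [nAppBag, bagMap]
  | t :: ts, l :: ls => by simp [nAppBag, bagMap, nAppBag_eq a ts ls]

lemma bagMap_inj {f : Rt → List Rt → Multiset Rt} {A : Set Rt} (hf : InjOn f A) :
    ∀ (ts ts' : List Rt) (ls ls' : List (List Rt)) (ss : List Rt),
      (∀ t ∈ ts, t ∈ A) → (∀ t ∈ ts', t ∈ A) → ss ∈ bagMap f ts ls → ss ∈ bagMap f ts' ls' →
      ts = ts' ∧ (ls.flatten : Multiset Rt) = ls'.flatten := by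
  intro ts
  induction ts with
  | nil =>
    rintro (_ | ⟨t', ts'⟩) (_ | ⟨l, ls⟩) (_ | ⟨l', ls'⟩) ss - - h h' <;> simp_all [bagMap]
  | cons t ts ih =>
    rintro (_ | ⟨t', ts'⟩) (_ | ⟨l, ls⟩) (_ | ⟨l', ls'⟩) ss hA hA' h h'
    case cons.cons.cons =>
      simp only [bagMap, Multiset.mem_bind, Multiset.mem_map] at h h'
      obtain ⟨s, hs, r, hr, rfl⟩ := h
      obtain ⟨s', hs', r', hr', e⟩ := h'
      obtain ⟨rfl, rfl⟩ := List.cons.inj e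
      obtain ⟨rfl, hl⟩ := hf t (hA t (by simp)) t' (hA' t' (by simp)) l l' s' hs hs'
      obtain ⟨rfl, hls⟩ := ih ts' ls ls' r' (fun u hu => hA u (by simp [hu]))
        (fun u hu => hA' u (by simp [hu])) hr hr'
      refine ⟨rfl, ?_⟩
      rw [List.flatten_cons, List.flatten_cons, ← Multiset.coe_add, ← Multiset.coe_add, hl, hls]
    all_goals
      simp only [bagMap, Multiset.mem_bind, Multiset.mem_map, Multiset.notMem_zero,
        Multiset.mem_singleton] at h h'
    obtain ⟨s, -, r, -, rfl⟩ := h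
    simp at h'

/-- The addends of the value at an application, for `f` acting on applications by distributing
the resources between the head and the elements of the bag. -/
def appMap (f : Rt → List Rt → Multiset Rt) (t : Rt) (ts bag : List Rt) : Set Rt :=
  {w | ∃ (l : List Rt) (ls : List (List Rt)), (bag : Multiset Rt) = (l : Multiset Rt) + (ls.flatten : Multiset Rt) ∧
    ∃ s ∈ f t l, ∃ ss ∈ bagMap f ts ls, w = app s ss}

lemma mem_appMap_of_linSub {x : ℕ} {t : Rt} {ts bag : List Rt} {w : Rt}
    (h : w ∈ linSub x (app t ts) bag) : w ∈ appMap (linSub x) t ts bag := by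
  rw [linSub, Multiset.mem_bind] at h
  obtain ⟨ls, hls, h⟩ := h
  have hsum := (flatten_of_mem_splits _ _ _ hls).2
  cases ls with
  | nil => simp at h
  | cons l ls =>
    simp only [Multiset.mem_bind, Multiset.mem_map, linSubBag_eq] at h
    obtain ⟨s, hs, ss, hss, rfl⟩ := h
    exact ⟨l, ls, by rw [← hsum]; simp, s, hs, ss, hss, rfl⟩

lemma mem_appMap_of_nApp {a : ℕ} {t : Rt} {ts bag : List Rt} {w : Rt}
    (h : w ∈ nApp a (app t ts) bag) : w ∈ appMap (nApp a) t ts bag := by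
  rw [nApp, Multiset.mem_bind] at h
  obtain ⟨ls, hls, h⟩ := h
  have hsum := (flatten_of_mem_splits _ _ _ hls).2
  cases ls with
  | nil => simp at h
  | cons l ls =>
    simp only [Multiset.mem_bind, Multiset.mem_map, nAppBag_eq] at h
    obtain ⟨s, hs, ss, hss, rfl⟩ := h
    exact ⟨l, ls, by rw [← hsum]; simp, s, hs, ss, hss, rfl⟩

lemma appMap_inj {f : Rt → List Rt → Multiset Rt} {A B : Set Rt} (hA : InjOn f A)
    (hB : InjOn f B) {t t' : Rt} {ts ts' d d' : List Rt} {w : Rt} (ht : t ∈ A) (ht' : t' ∈ A)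
    (hts : ∀ u ∈ ts, u ∈ B) (hts' : ∀ u ∈ ts', u ∈ B)
    (h : w ∈ appMap f t ts d) (h' : w ∈ appMap f t' ts' d') :
    app t ts = app t' ts' ∧ (d : Multiset Rt) = d' := by
  obtain ⟨l, ls, hd, s, hs, ss, hss, rfl⟩ := h
  obtain ⟨l', ls', hd', s', hs', ss', hss', e⟩ := h'
  obtain ⟨rfl, rfl⟩ := app.inj e
  obtain ⟨rfl, hl⟩ := hA t ht t' ht' l l' s hs hs'
  obtain ⟨rfl, hls⟩ := bagMap_inj hB ts ts' ls ls' ss hts hts' hss hss'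
  exact ⟨rfl, by rw [hd, hd', hl, hls]⟩

lemma eq_nil_of_mem {t w : Rt} {d : List Rt}
    (h : w ∈ (match d with | [] => ({t} : Multiset Rt) | _ => 0)) : d = [] ∧ w = t := by
  cases d <;> simp_all

lemma eq_singleton_of_mem {w : Rt} {d : List Rt}
    (h : w ∈ (match d with | [u] => ({u} : Multiset Rt) | _ => 0)) : d = [w] := by
  rcases d with _ | ⟨u, _ | ⟨v, d⟩⟩ <;> simp_all

lemma linSub_injOn (x : ℕ) (P : Lt) : InjOn (linSub x) (Taylor P) := by
  induction P with
  | var y =>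
    rintro p rfl p' rfl d d' w h h'
    refine ⟨rfl, ?_⟩
    rw [linSub.eq_def] at h h'
    dsimp only at h h'
    split_ifs at h h' with hy
    · rw [eq_singleton_of_mem h, eq_singleton_of_mem h']
    · rw [(eq_nil_of_mem h).1, (eq_nil_of_mem h').1]
  | lam y M ih =>
    rintro _ ⟨t, ht, rfl⟩ _ ⟨t', ht', rfl⟩ d d' w h h'
    rw [linSub.eq_def] at h h'
    dsimp only at h h'
    split_ifs at h h' with hy
    · obtain ⟨rfl, rfl⟩ := eq_nil_of_mem h
      obtain ⟨rfl, e⟩ := eq_nil_of_mem h'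
      exact ⟨e, rfl⟩
    · obtain ⟨s, hs, rfl⟩ := Multiset.mem_map.1 h
      obtain ⟨s', hs', e⟩ := Multiset.mem_map.1 h'
      obtain ⟨-, rfl⟩ := lam.inj e
      obtain ⟨rfl, hd⟩ := ih t ht t' ht' d d' _ hs hs'
      exact ⟨rfl, hd⟩
  | app M N ihM ihN =>
    rintro _ ⟨t, ht, ts, hts, rfl⟩ _ ⟨t', ht', ts', hts', rfl⟩ d d' w h h'
    exact appMap_inj ihM ihN ht ht' hts hts' (mem_appMap_of_linSub h) (mem_appMap_of_linSub h')
  | mu a b M ih =>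
    rintro _ ⟨t, ht, rfl⟩ _ ⟨t', ht', rfl⟩ d d' w h h'
    rw [linSub.eq_def] at h h'
    dsimp only at h h'
    obtain ⟨s, hs, rfl⟩ := Multiset.mem_map.1 h
    obtain ⟨s', hs', e⟩ := Multiset.mem_map.1 h'
    obtain ⟨-, -, rfl⟩ := mu.inj e
    obtain ⟨rfl, hd⟩ := ih t ht t' ht' d d' _ hs hs'
    exact ⟨rfl, hd⟩

/-- The case of a named subterm whose name is the one acted upon: the resources split into those
passed on to the subterm and those forming the new argument bag, which is visible in the
addend. -/
lemma split_inj {f : Rt → List Rt → Multiset Rt} {A : Set Rt} (hf : InjOn f A)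
    {t t' : Rt} {d d' : List Rt} (ht : t ∈ A) (ht' : t' ∈ A) {q q' : List Rt × List Rt}
    (hq : q ∈ splits2 d) (hq' : q' ∈ splits2 d') {s s' : Rt} (hs : s ∈ f t q.1)
    (hs' : s' ∈ f t' q'.1) (e : app s' q'.2 = app s q.2) :
    t = t' ∧ (d : Multiset Rt) = d' := by
  obtain ⟨rfl, e2⟩ := app.inj e
  obtain ⟨rfl, h1⟩ := hf t ht t' ht' _ _ _ hs hs'
  exact ⟨rfl, by rw [add_of_mem_splits2 d q hq, add_of_mem_splits2 d' q' hq', h1, e2]⟩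

lemma nApp_injOn (a : ℕ) (P : Lt) : InjOn (nApp a) (Taylor P) := by
  induction P with
  | var y =>
    rintro p rfl p' rfl d d' w h h'
    rw [nApp.eq_def] at h h'
    dsimp only at h h'
    exact ⟨rfl, by rw [(eq_nil_of_mem h).1, (eq_nil_of_mem h').1]⟩
  | lam y M ih =>
    rintro _ ⟨t, ht, rfl⟩ _ ⟨t', ht', rfl⟩ d d' w h h'
    rw [nApp.eq_def] at h h'
    dsimp only at h h'
    obtain ⟨s, hs, rfl⟩ := Multiset.mem_map.1 h
    obtain ⟨s', hs', e⟩ := Multiset.mem_map.1 h'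
    obtain ⟨-, rfl⟩ := lam.inj e
    obtain ⟨rfl, hd⟩ := ih t ht t' ht' d d' _ hs hs'
    exact ⟨rfl, hd⟩
  | app M N ihM ihN =>
    rintro _ ⟨t, ht, ts, hts, rfl⟩ _ ⟨t', ht', ts', hts', rfl⟩ d d' w h h'
    exact appMap_inj ihM ihN ht ht' hts hts' (mem_appMap_of_nApp h) (mem_appMap_of_nApp h')
  | mu c b M ih =>
    rintro _ ⟨t, ht, rfl⟩ _ ⟨t', ht', rfl⟩ d d' w h h'
    rw [nApp.eq_def] at h h'
    dsimp only at h h'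
    split_ifs at h h' with hc hb
    · obtain ⟨rfl, rfl⟩ := eq_nil_of_mem h
      obtain ⟨rfl, e⟩ := eq_nil_of_mem h'
      exact ⟨e, rfl⟩
    · simp only [Multiset.mem_bind, Multiset.mem_map] at h h'
      obtain ⟨q, hq, s, hs, rfl⟩ := h
      obtain ⟨q', hq', s', hs', e⟩ := h'
      obtain ⟨rfl, hd⟩ := split_inj ih ht ht' hq hq' hs hs' (mu.inj e).2.2
      exact ⟨rfl, hd⟩
    · obtain ⟨s, hs, rfl⟩ := Multiset.mem_map.1 h
      obtain ⟨s', hs', e⟩ := Multiset.mem_map.1 h'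
      obtain ⟨-, -, rfl⟩ := mu.inj e
      obtain ⟨rfl, hd⟩ := ih t ht t' ht' d d' _ hs hs'
      exact ⟨rfl, hd⟩

end Rt

/-- Lemma 3.5: elements of the Taylor expansion can be recovered from any
common addend of their linear substitutions / named applications (bags are
compared as multisets). -/
theorem forInjectivity (P Q : Lt) (p p' : Rt) (d d' : List Rt)
    (hp : p ∈ Taylor P) (hp' : p' ∈ Taylor P)
    (hd : ∀ u ∈ d, u ∈ Taylor Q) (hd' : ∀ u ∈ d', u ∈ Taylor Q)
    (x g e : ℕ)
    (h : (∃ w : Rt, w ∈ Rt.linSub x p d ∧ w ∈ Rt.linSub x p' d') ∨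
         (∃ w : Rt, w ∈ Rt.nApp g p d ∧ w ∈ Rt.nApp g p' d') ∨
         (∃ w : ℕ × Rt, w ∈ Rt.nAppNamed g e p d ∧ w ∈ Rt.nAppNamed g e p' d')) :
    p = p' ∧ (↑d : Multiset Rt) = ↑d' := by
  rcases h with ⟨w, h, h'⟩ | ⟨w, h, h'⟩ | ⟨w, h, h'⟩
  · exact Rt.linSub_injOn x P p hp p' hp' d d' w h h'
  · exact Rt.nApp_injOn g P p hp p' hp' d d' w h h'
  · rw [Rt.nAppNamed] at h h'
    split_ifs at h h' with he
    · simp only [Multiset.mem_bind, Multiset.mem_map] at h h'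
      obtain ⟨q, hq, s, hs, rfl⟩ := h
      obtain ⟨q', hq', s', hs', e⟩ := h'
      exact Rt.split_inj (Rt.nApp_injOn g P) hp hp' hq hq' hs hs' (Prod.mk.inj e).2
    · obtain ⟨s, hs, rfl⟩ := Multiset.mem_map.1 h
      obtain ⟨s', hs', e⟩ := Multiset.mem_map.1 h'
      obtain ⟨-, rfl⟩ := Prod.mk.inj e
      exact Rt.nApp_injOn g P p hp p' hp' d d' _ hs hs'

end RLMu
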